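/- arXiv:math/0610384 — 6 statements merged into one kernel-verified Lean document; each statement's English description precedes it below -/
import Mathlib

section
/- Let s ≥ 3 and k ≥ 1 be integers and let T be a finite tree with maximum degree at most s and with v(T) ≥ k + 1. Then T has a branch B such that v(B) ≤ (s−1)k + 1 and τ_k(B) = 1. -/
/-- `H` is a path with `k` edges (a "k-edge path"), as a subgraph of `G`. -/
def SimpleGraph.Subgraph.IsKEdgePath {V : Type*} {G : SimpleGraph V}
    (H : G.Subgraph) (k : ℕ) : Prop :=
  ∃ (u v : V) (w : G.Walk u v), w.IsPath ∧ w.length = k ∧ H = w.toSubgraph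

/-- `H` is a tree with `k` edges (a "k-edge tree"), as a subgraph of `G`. -/
def SimpleGraph.Subgraph.IsKEdgeTree {V : Type*} {G : SimpleGraph V}
    (H : G.Subgraph) (k : ℕ) : Prop :=
  H.coe.IsTree ∧ H.edgeSet.ncard = k

/-- The maximum number of pairwise vertex-disjoint `k`-edge paths in `G`. -/
noncomputable def SimpleGraph.lambdaK {V : Type*} (G : SimpleGraph V) (k : ℕ) : ℕ :=
  sSup {n | ∃ P : Finset G.Subgraph,
    (∀ H ∈ P, H.IsKEdgePath k) ∧
    (P : Set G.Subgraph).Pairwise (fun H H' => Disjoint H.verts H'.verts) ∧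
    P.card = n}

/-- The maximum number of pairwise vertex-disjoint `k`-edge trees in `G`. -/
noncomputable def SimpleGraph.tauK {V : Type*} (G : SimpleGraph V) (k : ℕ) : ℕ :=
  sSup {n | ∃ P : Finset G.Subgraph,
    (∀ H ∈ P, H.IsKEdgeTree k) ∧
    (P : Set G.Subgraph).Pairwise (fun H H' => Disjoint H.verts H'.verts) ∧
    P.card = n}

namespace Aux11
open SimpleGraph

lemma parent {V : Type*} {G : SimpleGraph V} (hG : G.Connected) {a w : V} (h : w ≠ a) :
    ∃ u, G.Adj u w ∧ G.dist a u + 1 = G.dist a w := by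
  obtain ⟨p, hp⟩ := hG.exists_walk_length_eq_dist w a
  cases p with
  | nil => exact absurd rfl h
  | @cons _ u _ hadj q =>
    refine ⟨u, hadj.symm, ?_⟩
    have h1 := G.dist_le q
    have h2 := hG.dist_triangle (u := a) (v := u) (w := w)
    have h3 := dist_eq_one_iff_adj.2 hadj.symm
    rw [Walk.length_cons] at hp
    have h4 := G.dist_comm (u := a) (v := u)
    have h5 := G.dist_comm (u := a) (v := w)
    omega

lemma parent_unique {V : Type*} {G : SimpleGraph V} (hG : G.IsTree) {r u u' w : V}
    (hu : G.Adj u w) (hu' : G.Adj u' w) (h : G.dist r u + 1 = G.dist r w)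
    (h' : G.dist r u' + 1 = G.dist r w) : u = u' := by
  obtain ⟨p, hp⟩ := hG.1.exists_walk_length_eq_dist r u
  obtain ⟨q, hq⟩ := hG.1.exists_walk_length_eq_dist r u'
  have e1 : (p.concat hu).IsPath := Walk.isPath_of_length_eq_dist _ (by simp [hp, h])
  have e2 : (q.concat hu').IsPath := Walk.isPath_of_length_eq_dist _ (by simp [hq, h'])
  have := (hG.existsUnique_path r w).unique e1 e2
  have := congrArg Walk.penultimate this
  simpa using this

lemma conn_of_parent {V : Type*} {G : SimpleGraph V} (S : Set V) (a : V) (ha : a ∈ S)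
    (h : ∀ w ∈ S, w ≠ a → ∃ u ∈ S, G.Adj u w ∧ G.dist a u + 1 = G.dist a w) :
    (G.induce S).Connected := by
  have key : ∀ n, ∀ w (hw : w ∈ S), G.dist a w = n →
      (G.induce S).Reachable ⟨a, ha⟩ ⟨w, hw⟩ := by
    intro n
    induction n with
    | zero =>
      intro w hw hd
      by_cases e : w = a
      · subst e; exact Reachable.refl _
      · obtain ⟨u, _, _, h3⟩ := h w hw e
        omega
    | succ n ih =>
      intro w hw hd
      by_cases e : w = a
      · subst e; exact Reachable.refl _
      · obtain ⟨u, hu, h2, h3⟩ := h w hw e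
        refine (ih u hu (by omega)).trans (Adj.reachable ?_)
        simpa using h2
  have : Nonempty S := ⟨⟨a, ha⟩⟩
  refine ⟨fun x y => ?_⟩
  exact (key _ x.1 x.2 rfl).symm.trans (key _ y.1 y.2 rfl)

/-- vertices below `v` -/
def down {V : Type*} (G : SimpleGraph V) (r v : V) : Set V :=
  {w | G.dist r w = G.dist r v + G.dist v w}

lemma down_conn {V : Type*} {G : SimpleGraph V} (hG : G.Connected) (r v : V) :
    (G.induce (down G r v)).Connected := by
  apply conn_of_parent _ v (by simp [down])
  intro w hw hne
  obtain ⟨u, h1, h2⟩ := parent hG hne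
  refine ⟨u, ?_, h1, h2⟩
  have h3 := hG.dist_triangle (u := r) (v := u) (w := w)
  have h4 := dist_eq_one_iff_adj.2 h1
  have h5 := hG.dist_triangle (u := r) (v := v) (w := u)
  simp only [down, Set.mem_ofPred_eq] at *
  omega

lemma down_compl_conn {V : Type*} {G : SimpleGraph V} (hG : G.Connected) (r v : V) (hv : v ≠ r) :
    (G.induce (down G r v)ᶜ).Connected := by
  apply conn_of_parent _ r
  · simp only [down, Set.mem_compl_iff, Set.mem_ofPred_eq, dist_self]
    have := hG.pos_dist_of_ne hv
    omega
  intro w hw hne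
  obtain ⟨u, h1, h2⟩ := parent hG hne
  refine ⟨u, ?_, h1, h2⟩
  intro hu
  apply hw
  have h3 := hG.dist_triangle (u := v) (v := u) (w := w)
  have h4 := dist_eq_one_iff_adj.2 h1
  have h5 := hG.dist_triangle (u := r) (v := v) (w := w)
  simp only [down, Set.mem_ofPred_eq] at *
  omega

/-- children of `v` -/
def IsChild {V : Type*} (G : SimpleGraph V) (r v c : V) : Prop :=
  G.Adj v c ∧ G.dist r c = G.dist r v + 1

lemma down_cover {V : Type*} {G : SimpleGraph V} (hG : G.Connected) {r v w : V}
    (hw : w ∈ down G r v) (hne : w ≠ v) : ∃ c, IsChild G r v c ∧ w ∈ down G r c := by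
  obtain ⟨c, h1, h2⟩ := parent hG (a := w) (w := v) hne.symm
  have h3 := hG.dist_triangle (u := r) (v := c) (w := w)
  have h4 := dist_eq_one_iff_adj.2 h1.symm
  have h5 := hG.dist_triangle (u := r) (v := v) (w := c)
  have h6 := G.dist_comm (u := w) (v := c)
  have h7 := G.dist_comm (u := w) (v := v)
  refine ⟨c, ⟨h1.symm, ?_⟩, ?_⟩ <;> simp only [down, Set.mem_ofPred_eq] at * <;> omega

lemma child_down_ssubset {V : Type*} {G : SimpleGraph V} (hG : G.Connected) {r v c : V}
    (hc : IsChild G r v c) : down G r c ⊂ down G r v := by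
  obtain ⟨h1, h2⟩ := hc
  have h4 := dist_eq_one_iff_adj.2 h1
  rw [Set.ssubset_iff_of_subset]
  · refine ⟨v, by simp [down], ?_⟩
    simp only [down, Set.mem_ofPred_eq]
    omega
  · intro w hw
    have h3 := hG.dist_triangle (u := v) (v := c) (w := w)
    have h5 := hG.dist_triangle (u := r) (v := v) (w := w)
    simp only [down, Set.mem_ofPred_eq] at *
    omega

lemma down_adj {V : Type*} {G : SimpleGraph V} (hG : G.IsTree) {r v c x y : V}
    (hc : IsChild G r v c) (hx : x ∈ down G r c) (hxy : G.Adj x y) (hy : y ≠ v) :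
    y ∈ down G r c := by
  have h0 := dist_eq_one_iff_adj.2 hxy
  have h1 := hG.1.dist_triangle (u := c) (v := x) (w := y)
  have h2 := hG.1.dist_triangle (u := r) (v := c) (w := y)
  rcases hG.dist_eq_dist_add_one_of_adj r hxy with h | h
  · by_cases e : x = c
    · subst e
      exact absurd (parent_unique hG (r := r) hxy.symm hc.1 (by omega) hc.2.symm) hy
    · obtain ⟨u, hu1, hu2⟩ := parent hG.1 e
      have h3 := hG.1.dist_triangle (u := r) (v := u) (w := x)
      have h4 := dist_eq_one_iff_adj.2 hu1
      have h5 := hG.1.dist_triangle (u := r) (v := c) (w := u)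
      simp only [down, Set.mem_ofPred_eq] at hx ⊢
      have : u = y := parent_unique hG (r := r) hu1 hxy.symm (by omega) (by omega)
      subst this
      omega
  · simp only [down, Set.mem_ofPred_eq] at *
    omega

lemma exists_conn {V : Type*} [Fintype V] {G : SimpleGraph V} (hG : G.Connected) (k : ℕ)
    (hk : k + 1 ≤ Fintype.card V) : ∃ S : Set V, S.ncard = k + 1 ∧ (G.induce S).Connected := by
  induction k with
  | zero =>
    obtain ⟨a⟩ := hG.nonempty
    refine ⟨{a}, by simp, ?_⟩
    apply conn_of_parent _ a (Set.mem_singleton a)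
    intro w hw h
    exact absurd hw h
  | succ k ih =>
    obtain ⟨S, hS, hc⟩ := ih (by omega)
    obtain ⟨a, ha⟩ : S.Nonempty := by
      rw [← Set.ncard_pos]; omega
    obtain ⟨b, hb⟩ : ∃ b, b ∉ S := by
      by_contra! hall
      have : S = Set.univ := Set.eq_univ_of_forall hall
      rw [this, Set.ncard_univ, Nat.card_eq_fintype_card] at hS
      omega
    obtain ⟨p⟩ := hG.preconnected a b
    obtain ⟨d, _, h1, h2⟩ := p.exists_boundary_dart S ha hb
    refine ⟨S ∪ {d.fst, d.snd}, ?_, ?_⟩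
    · have : S ∪ {d.fst, d.snd} = insert d.snd S := by
        ext x; simp only [Set.mem_union, Set.mem_insert_iff, Set.mem_singleton_iff]
        constructor
        · rintro (h | h | h) <;> simp_all
        · rintro (h | h) <;> simp_all
      rw [this, Set.ncard_insert_of_notMem h2, hS]
    · exact induce_union_connected hc.preconnected
        (induce_pair_connected_of_adj d.adj).preconnected ⟨d.fst, h1, by simp⟩

lemma tree_card {V : Type*} [Finite V] {G : SimpleGraph V} (H : G.Subgraph)
    (h : H.coe.IsTree) : H.edgeSet.ncard + 1 = H.verts.ncard := by
  classical
  have := Fintype.ofFinite V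
  have := Fintype.ofFinite H.verts
  have := Fintype.ofFinite H.coe.edgeSet
  have h1 := h.card_edgeFinset
  rw [← H.image_coe_edgeSet_coe, Set.ncard_image_of_injective _
    (Sym2.map.injective Subtype.val_injective), ← Nat.card_coe_set_eq H.verts,
    Nat.card_eq_fintype_card, ← h1, ← Nat.card_coe_set_eq, Nat.card_eq_fintype_card, edgeFinset_card]

lemma induce_tree {V : Type*} {G : SimpleGraph V} (hG : G.IsAcyclic) (S : Set V)
    (h : (G.induce S).Connected) : ((⊤ : G.Subgraph).induce S).coe.IsTree :=
  ⟨(connected_induce_iff.1 h).coe, hG.subgraph _⟩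

lemma tau_one {V : Type*} [Fintype V] {G : SimpleGraph V} (hG : G.IsTree) (k : ℕ)
    (hk : k + 1 ≤ Fintype.card V) (v : V)
    (h : ∀ H : G.Subgraph, H.IsKEdgeTree k → v ∈ H.verts) : G.tauK k = 1 := by
  classical
  have hle : ∀ n ∈ {n | ∃ P : Finset G.Subgraph, (∀ H ∈ P, H.IsKEdgeTree k) ∧
      (P : Set G.Subgraph).Pairwise (fun H H' => Disjoint H.verts H'.verts) ∧
      P.card = n}, n ≤ 1 := by
    rintro n ⟨P, h1, h2, rfl⟩
    rw [Finset.card_le_one]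
    intro a ha b hb
    by_contra hne
    exact Set.disjoint_left.1 (h2 ha hb hne) (h a (h1 a ha)) (h b (h1 b hb))
  apply le_antisymm (csSup_le' hle)
  apply le_csSup ⟨1, hle⟩
  obtain ⟨S, hS, hc⟩ := exists_conn hG.1 k hk
  have ht := induce_tree hG.2 S hc
  refine ⟨{(⊤ : G.Subgraph).induce S}, ?_, by simp, by simp⟩
  intro H hH
  rw [Finset.mem_singleton] at hH
  subst hH
  refine ⟨ht, ?_⟩
  have := tree_card _ ht
  rw [Subgraph.induce_verts] at this
  omega

lemma children_card {V : Type*} [Fintype V] {G : SimpleGraph V} [DecidableRel G.Adj]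
    (hG : G.Connected) {s : ℕ} (hs : 3 ≤ s) {r : V} (hr : G.degree r = 1) (v : V)
    (hv : G.degree v ≤ s) : {c | IsChild G r v c}.ncard ≤ s - 1 := by
  classical
  have hsub : {c | IsChild G r v c} ⊆ ↑(G.neighborFinset v) := by
    intro c hc; simpa using hc.1
  by_cases e : v = r
  · subst e
    have := Set.ncard_le_ncard hsub
    rw [Set.ncard_coe_finset, card_neighborFinset_eq_degree] at this
    omega
  · obtain ⟨u, h1, h2⟩ := parent hG e
    have : {c | IsChild G r v c} ⊂ ↑(G.neighborFinset v) := by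
      rw [Set.ssubset_iff_of_subset hsub]
      refine ⟨u, by simpa using h1.symm, ?_⟩
      rintro ⟨_, h⟩
      omega
    have := Set.ncard_lt_ncard this
    rw [Set.ncard_coe_finset, card_neighborFinset_eq_degree] at this
    omega

end Aux11

open Aux11
/-- Let `s ≥ 3` and `k ≥ 1` and let `T` be a finite tree with maximum degree at
most `s` and with `v(T) ≥ k + 1`.  Then `T` has a branch `B` (a subtree such that
either `B = T` or `T − B` is again a tree) with `v(B) ≤ (s−1)k + 1` and
`τ_k(B) = 1`. -/
theorem stmt_11 {V : Type} [Fintype V] (s k : ℕ) (hs : 3 ≤ s) (hk : 1 ≤ k)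
    (T : SimpleGraph V) [DecidableRel T.Adj] (hT : T.IsTree)
    (hdeg : ∀ v : V, T.degree v ≤ s) (hcard : k + 1 ≤ Fintype.card V) :
    ∃ B : T.Subgraph, B.coe.IsTree ∧
      (B = ⊤ ∨ (T.induce B.vertsᶜ).IsTree) ∧
      B.verts.ncard ≤ (s - 1) * k + 1 ∧
      B.coe.tauK k = 1 := by
  classical
  have : Nontrivial V := Fintype.one_lt_card_iff_nontrivial.1 (by omega)
  obtain ⟨r, hr⟩ := hT.exists_vert_degree_one_of_nontrivial
  have hroot : down T r r = Set.univ := by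
    ext w; simp [down]
  let C : Finset V := Finset.univ.filter fun v => k + 1 ≤ (down T r v).ncard
  have hC : C.Nonempty := ⟨r, by
    simp only [C, Finset.mem_filter, Finset.mem_univ, true_and, hroot, Set.ncard_univ,
      Nat.card_eq_fintype_card]
    exact hcard⟩
  obtain ⟨v, hv, hmin⟩ := C.exists_min_image (fun v => (down T r v).ncard) hC
  have hv' : k + 1 ≤ (down T r v).ncard := by simpa [C] using hv
  have hchild : ∀ c, IsChild T r v c → (down T r c).ncard ≤ k := by
    intro c hc
    by_contra! hlt
    have h1 := hmin c (by simp only [C, Finset.mem_filter, Finset.mem_univ, true_and]; omega)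
    have h2 := Set.ncard_lt_ncard (child_down_ssubset hT.1 hc)
    omega
  have htree := induce_tree hT.2 _ (down_conn hT.1 r v)
  refine ⟨(⊤ : T.Subgraph).induce (down T r v), htree, ?_, ?_, ?_⟩
  · by_cases e : v = r
    · left
      subst e
      rw [hroot]
      exact SimpleGraph.Subgraph.induce_self_verts
    · right
      exact ⟨down_compl_conn hT.1 r v e, hT.2.induce _⟩
  · rw [SimpleGraph.Subgraph.induce_verts]
    have hsub : down T r v ⊆
        insert v (⋃ c ∈ (Finset.univ.filter fun c => IsChild T r v c), down T r c) := by
      intro w hw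
      by_cases e : w = v
      · exact Or.inl e
      · obtain ⟨c, hc, hwc⟩ := down_cover hT.1 hw e
        right
        simp only [Set.mem_iUnion]
        exact ⟨c, by simpa using hc, hwc⟩
    have h1 := Set.ncard_le_ncard hsub (Set.toFinite _)
    have h2 := Set.ncard_insert_le v
      (⋃ c ∈ (Finset.univ.filter fun c => IsChild T r v c), down T r c)
    have h3 := Finset.set_ncard_biUnion_le (Finset.univ.filter fun c => IsChild T r v c)
      (fun c => down T r c)
    have h4 := Finset.sum_le_card_nsmul (Finset.univ.filter fun c => IsChild T r v c)
      (fun c => (down T r c).ncard) k (fun c hc => hchild c (by simpa using hc))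
    have h5 := children_card hT.1 hs hr v (hdeg v)
    have h6 : (Finset.univ.filter fun c => IsChild T r v c).card = {c | IsChild T r v c}.ncard := by
      rw [← Set.ncard_coe_finset]; simp
    rw [h6, smul_eq_mul] at h4
    have h7 := Nat.mul_le_mul_right k h5
    omega
  · have hvm : v ∈ down T r v := by simp [down]
    refine tau_one htree k ?_ ⟨v, hvm⟩ ?_
    · rw [← Nat.card_eq_fintype_card]
      exact hv'
    · intro H hH
      by_contra hvH
      have hcard := tree_card H hH.1
      rw [hH.2] at hcard
      obtain ⟨x0⟩ := hH.1.1.nonempty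
      have hne : ∀ x : H.verts, x.1.1 ≠ v := by
        intro x e
        apply hvH
        have : x.1 = ⟨v, hvm⟩ := Subtype.ext e
        rw [← this]
        exact x.2
      obtain ⟨c, hc, hx0⟩ := down_cover hT.1 x0.1.2 (hne x0)
      have hall : ∀ x : H.verts, x.1.1 ∈ down T r c := by
        intro x
        obtain ⟨p⟩ := hH.1.1.preconnected x x0
        induction p with
        | nil => exact hx0
        | @cons a b _ hab q ih =>
          refine down_adj hT hc (ih hx0) ?_ (hne a)
          have h1 : H.Adj a.1 b.1 := hab
          have h2 := H.adj_sub h1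
          have h3 : T.Adj a.1.1 b.1.1 :=
            SimpleGraph.Subgraph.adj_sub ((⊤ : T.Subgraph).induce (down T r v)) h2
          exact h3.symm
      have h1 : (Subtype.val '' H.verts).ncard ≤ (down T r c).ncard := by
        apply Set.ncard_le_ncard _ (Set.toFinite _)
        rintro _ ⟨x, hx, rfl⟩
        exact hall ⟨x, hx⟩
      rw [Set.ncard_image_of_injective _ Subtype.val_injective] at h1
      have := hchild c hc
      omega
end

section
/- For every integer s ≥ 4 and every natural number N there exists a finite simple connected graph G with v(G) ≥ N such that every vertex of G has degree at least 2 and at most s and λ(G) = v(G)/(s+1). -/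
lemma lam_aux {V I : Type*} [Fintype V] [Fintype I] (G : SimpleGraph V) (h : V → I)
    (c l r : I → V) (hc : ∀ i, h (c i) = i) (hl : ∀ i, h (l i) = i) (hr : ∀ i, h (r i) = i)
    (al : ∀ i, G.Adj (l i) (c i)) (ar : ∀ i, G.Adj (c i) (r i)) (lr : ∀ i, l i ≠ r i)
    (hit : ∀ a b d, G.Adj a b → G.Adj b d → a ≠ d → ∃ i, a = c i ∨ b = c i ∨ d = c i) :
    G.lambdaK 2 = Fintype.card I := by
  classical
  have key : IsGreatest {n | ∃ P : Finset G.Subgraph,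
    (∀ H ∈ P, H.IsKEdgePath 2) ∧
    (P : Set G.Subgraph).Pairwise (fun H H' => Disjoint H.verts H'.verts) ∧
    P.card = n} (Fintype.card I) := by
    constructor
    · let W : ∀ i, G.Walk (l i) (r i) := fun i =>
        SimpleGraph.Walk.cons (al i) (SimpleGraph.Walk.cons (ar i) SimpleGraph.Walk.nil)
      have hv : ∀ i v, v ∈ (W i).toSubgraph.verts → h v = i := by
        intro i v hv
        simp only [SimpleGraph.Walk.mem_verts_toSubgraph, W, SimpleGraph.Walk.support_cons,
          SimpleGraph.Walk.support_nil, List.mem_cons, List.not_mem_nil, or_false] at hv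
        rcases hv with rfl | rfl | rfl
        · exact hl i
        · exact hc i
        · exact hr i
      have hm : ∀ i, c i ∈ (W i).toSubgraph.verts := by
        intro i
        simp [W]
      refine ⟨Finset.univ.image (fun i => (W i).toSubgraph), ?_, ?_, ?_⟩
      · intro H hH
        simp only [Finset.mem_image, Finset.mem_univ, true_and] at hH
        obtain ⟨i, rfl⟩ := hH
        refine ⟨_, _, W i, ?_, rfl, rfl⟩
        simp [W, SimpleGraph.Walk.cons_isPath_iff, lr i, (al i).ne, (ar i).ne]
      · intro H hH H' hH' hne
        simp only [Finset.coe_image, Finset.coe_univ, Set.image_univ, Set.mem_range] at hH hH'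
        obtain ⟨i, rfl⟩ := hH
        obtain ⟨j, rfl⟩ := hH'
        rw [Set.disjoint_left]
        intro v h1 h2
        have := (hv i v h1).symm.trans (hv j v h2)
        subst this
        exact hne rfl
      · rw [Finset.card_image_of_injective, Finset.card_univ]
        intro i j hij
        have h1 := hm i
        simp only at hij
        rw [hij] at h1
        rw [← hv j _ h1, hc]
    · rintro n ⟨P, hP, hd, rfl⟩
      have ex : ∀ H ∈ P, ∃ i, c i ∈ H.verts := by
        intro H hH
        obtain ⟨u, v, w, hw, hlen, rfl⟩ := hP H hH
        match w, hw, hlen with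
        | .cons (v := b) h1 (.cons h2 .nil), hw, _ =>
          simp only [SimpleGraph.Walk.cons_isPath_iff, SimpleGraph.Walk.support_cons,
            SimpleGraph.Walk.support_nil, List.mem_cons, List.not_mem_nil, or_false, not_or] at hw
          obtain ⟨i, hi⟩ := hit _ _ _ h1 h2 hw.2.2
          refine ⟨i, ?_⟩
          simp only [SimpleGraph.Walk.mem_verts_toSubgraph, SimpleGraph.Walk.support_cons,
            SimpleGraph.Walk.support_nil, List.mem_cons, List.not_mem_nil, or_false]
          rcases hi with hi | hi | hi <;> simp [hi]
      by_cases hI : Nonempty I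
      swap
      · have : P = ∅ := by
          by_contra hne
          obtain ⟨H, hH⟩ := Finset.nonempty_iff_ne_empty.2 hne
          exact hI ⟨(ex H hH).choose⟩
        simp [this]
      choose! f hf using ex
      rw [← Finset.card_univ]
      refine Finset.card_le_card_of_injOn f (fun _ _ => Finset.mem_univ _) ?_
      intro H hH H' hH' heq
      by_contra hne
      have := Set.disjoint_left.1 (hd hH hH' hne) (hf H hH)
      rw [heq] at this
      exact this (hf H' hH')
  exact key.csSup_eq

/-- the partner hub -/
def mateG (m s : ℕ) : ZMod m × Bool → Fin s → ZMod m × Bool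
  | (i, false), j => (i + (if j.val = 0 then 1 else 0), true)
  | (i, true), j => (i - (if j.val = 0 then 1 else 0), false)

lemma mateG_mate (m s : ℕ) (p : ZMod m × Bool) (j : Fin s) :
    mateG m s (mateG m s p j) j = p := by
  rcases p with ⟨i, _ | _⟩ <;> simp [mateG]

lemma mateG_ne (m s : ℕ) (p : ZMod m × Bool) (j : Fin s) : mateG m s p j ≠ p := by
  rcases p with ⟨i, _ | _⟩ <;> simp [mateG]

/-- adjacency -/
def adjG (m s : ℕ) : (ZMod m × Bool) × Option (Fin s) → (ZMod m × Bool) × Option (Fin s) → Prop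
  | (_, none), (_, none) => False
  | (p, none), (q, some _) => p = q
  | (p, some _), (q, none) => p = q
  | (p, some j), (q, some k) => j = k ∧ q = mateG m s p j

/-- the graph -/
def grG (m s : ℕ) : SimpleGraph ((ZMod m × Bool) × Option (Fin s)) where
  Adj := adjG m s
  symm := ⟨by
    rintro ⟨p, _ | j⟩ ⟨q, _ | k⟩ h <;> simp only [adjG] at h ⊢
    · exact h.symm
    · exact h.symm
    · obtain ⟨rfl, rfl⟩ := h
      exact ⟨rfl, (mateG_mate _ _ _ _).symm⟩⟩
  loopless := ⟨by
    rintro ⟨p, _ | j⟩ h <;> simp only [adjG] at h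
    exact mateG_ne _ _ _ _ h.2.symm⟩

lemma grG_nbr_hub (m s : ℕ) (p) : ((grG m s).neighborSet (p, none)).ncard = s := by
  have : (grG m s).neighborSet (p, none) = Set.range (fun j : Fin s => (p, some j)) := by
    ext ⟨q, _ | k⟩ <;> simp [SimpleGraph.neighborSet, grG, adjG]
  rw [this, ← Set.image_univ, Set.ncard_image_of_injective, Set.ncard_univ, Nat.card_fin]
  intro a b hab
  simpa using hab

lemma grG_nbr_sub (m s : ℕ) (p j) : ((grG m s).neighborSet (p, some j)).ncard = 2 := by
  have : (grG m s).neighborSet (p, some j) = {(p, none), (mateG m s p j, some j)} := by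
    ext ⟨q, _ | k⟩
    · simp [SimpleGraph.neighborSet, grG, adjG, eq_comm]
    · simp only [SimpleGraph.neighborSet, grG, adjG, Set.mem_ofPred_eq, Set.mem_insert_iff,
        Set.mem_singleton_iff, Prod.mk.injEq, reduceCtorEq, and_false, false_or, Option.some.injEq]
      constructor <;> rintro ⟨rfl, rfl⟩ <;> exact ⟨rfl, rfl⟩
  rw [this, Set.ncard_pair]
  simp

lemma grG_conn (m s : ℕ) [NeZero m] (hs : 4 ≤ s) : (grG m s).Connected := by
  have h1 : ∀ p j, (grG m s).Reachable (p, none) (p, some j) := fun p j =>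
    SimpleGraph.Adj.reachable (show adjG m s (p, none) (p, some j) from rfl)
  have h2 : ∀ p j, (grG m s).Reachable (p, none) (mateG m s p j, none) := fun p j =>
    ((h1 p j).trans (SimpleGraph.Adj.reachable
      (show (grG m s).Adj (p, some j) (mateG m s p j, some j) from ⟨rfl, rfl⟩))).trans (h1 _ j).symm
  have h3 : ∀ i : ZMod m, (grG m s).Reachable ((i, false), none) ((i, true), none) := by
    intro i
    simpa [mateG] using h2 (i, false) ⟨1, by omega⟩
  have h4 : ∀ i : ZMod m, (grG m s).Reachable ((i, false), none) ((i + 1, true), none) := by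
    intro i
    simpa [mateG] using h2 (i, false) ⟨0, by omega⟩
  have h5 : ∀ k : ℕ, (grG m s).Reachable ((0, false), none) (((k : ZMod m), false), none) := by
    intro k
    induction k with
    | zero => simp
    | succ k ih =>
      push_cast
      exact (ih.trans (h4 _)).trans (h3 _).symm
  have h6 : ∀ x, (grG m s).Reachable ((0, false), none) x := by
    have h7 : ∀ p, (grG m s).Reachable ((0, false), none) (p, none) := by
      rintro ⟨i, b⟩
      obtain ⟨k, rfl⟩ := ZMod.natCast_zmod_surjective i
      cases b
      · exact h5 k
      · exact (h5 k).trans (h3 _)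
    rintro ⟨p, _ | j⟩
    · exact h7 p
    · exact (h7 p).trans (h1 p j)
  exact (SimpleGraph.connected_iff_exists_forall_reachable _).2 ⟨_, h6⟩

lemma grG_hit (m s : ℕ) (a b d) (h1 : (grG m s).Adj a b) (h2 : (grG m s).Adj b d) (h3 : a ≠ d) :
    ∃ i, a = (i, none) ∨ b = (i, none) ∨ d = (i, none) := by
  obtain ⟨p, _ | j⟩ := a
  · exact ⟨p, Or.inl rfl⟩
  obtain ⟨q, _ | k⟩ := b
  · exact ⟨q, Or.inr (Or.inl rfl)⟩
  obtain ⟨t, _ | l⟩ := d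
  · exact ⟨t, Or.inr (Or.inr rfl)⟩
  obtain ⟨rfl, rfl⟩ : j = k ∧ q = mateG m s p j := h1
  obtain ⟨rfl, rfl⟩ : j = l ∧ t = mateG m s (mateG m s p j) j := h2
  rw [mateG_mate] at h3
  exact absurd rfl h3

/-- For every `s ≥ 4` and every `N` there exists a finite simple connected graph
`G` with `v(G) ≥ N`, all vertex degrees between 2 and `s`, and
`λ(G) = v(G)/(s+1)`. -/
theorem stmt_14 (s : ℕ) (hs : 4 ≤ s) (N : ℕ) :
    ∃ (n : ℕ) (G : SimpleGraph (Fin n)),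
      N ≤ n ∧ G.Connected ∧
      (∀ v : Fin n, 2 ≤ (G.neighborSet v).ncard ∧ (G.neighborSet v).ncard ≤ s) ∧
      (G.lambdaK 2 : ℚ) = (n : ℚ) / (s + 1) := by
  let m := N + 1
  have : NeZero m := ⟨Nat.succ_ne_zero N⟩
  have hcard : Fintype.card ((ZMod m × Bool) × Option (Fin s)) = m * 2 * (s + 1) := by
    simp [ZMod.card]
  let e : Fin (m * 2 * (s + 1)) ≃ (ZMod m × Bool) × Option (Fin s) :=
    (Fintype.equivFinOfCardEq hcard).symm
  refine ⟨m * 2 * (s + 1), (grG m s).comap e, ?_, ?_, ?_, ?_⟩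
  · have : N ≤ m := Nat.le_succ N
    nlinarith [Nat.zero_le (m * s)]
  · exact (SimpleGraph.Iso.connected_iff (SimpleGraph.Iso.comap e (grG m s))).2 (grG_conn m s hs)
  · intro v
    have h1 : ((grG m s).comap e).neighborSet v = e ⁻¹' ((grG m s).neighborSet (e v)) := by
      ext x
      simp [SimpleGraph.neighborSet]
    have h2 : (((grG m s).comap e).neighborSet v).ncard = ((grG m s).neighborSet (e v)).ncard := by
      rw [h1]
      exact Set.ncard_preimage_of_injective_subset_range e.injective (by simp)
    rw [h2]
    obtain ⟨p, _ | j⟩ := e v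
    · rw [grG_nbr_hub]; omega
    · rw [grG_nbr_sub]; omega
  · have := lam_aux ((grG m s).comap e) (fun v => (e v).1) (fun i => e.symm (i, none))
      (fun i => e.symm (i, some ⟨0, by omega⟩)) (fun i => e.symm (i, some ⟨1, by omega⟩))
      (by simp) (by simp) (by simp) (by simp [grG, adjG]) (by simp [grG, adjG])
      (by simp) (by
        intro a b d h1 h2 h3
        obtain ⟨i, hi⟩ := grG_hit m s (e a) (e b) (e d) h1 h2 (fun h => h3 (e.injective h))
        refine ⟨i, ?_⟩
        simpa only [Equiv.eq_symm_apply] using hi)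
    rw [this]
    have h2 : Fintype.card (ZMod m × Bool) = m * 2 := by simp [ZMod.card]
    rw [h2]
    have : (s : ℚ) + 1 ≠ 0 := by positivity
    push_cast
    field_simp
end

section
/- For every natural number N there exists a finite simple connected graph G with v(G) ≥ N such that every vertex of G has degree 2 or 3, v(G) ≠ 5, and λ(G) = v(G)/4. -/
theorem lambda_eq_of_centers {V S : Type*} [Fintype S] [Fintype V] (G : SimpleGraph V)
    (c p q : S → V) (owner : V → S)
    (hoc : ∀ s, owner (c s) = s) (hop : ∀ s, owner (p s) = s) (hoq : ∀ s, owner (q s) = s)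
    (hp : ∀ s, G.Adj (p s) (c s)) (hq : ∀ s, G.Adj (c s) (q s)) (hpq : ∀ s, p s ≠ q s)
    (hmeet : ∀ u v w, G.Adj u v → G.Adj v w → u ≠ w →
      ∃ s, c s = u ∨ c s = v ∨ c s = w) :
    G.lambdaK 2 = Fintype.card S := by
  classical
  unfold SimpleGraph.lambdaK
  refine IsGreatest.csSup_eq ⟨?_, ?_⟩
  · let W : S → G.Subgraph := fun s =>
      (SimpleGraph.Walk.cons (hp s) (SimpleGraph.Walk.cons (hq s) SimpleGraph.Walk.nil)).toSubgraph
    have hW : ∀ s v, v ∈ (W s).verts → owner v = s := by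
      intro s v hv
      simp only [W, SimpleGraph.Walk.mem_verts_toSubgraph, SimpleGraph.Walk.support_cons,
        SimpleGraph.Walk.support_nil, List.mem_cons, List.not_mem_nil, or_false] at hv
      rcases hv with rfl | rfl | rfl
      · exact hop s
      · exact hoc s
      · exact hoq s
    have hc : ∀ s, c s ∈ (W s).verts := by
      intro s
      simp only [W, SimpleGraph.Walk.mem_verts_toSubgraph, SimpleGraph.Walk.support_cons,
        SimpleGraph.Walk.support_nil, List.mem_cons, List.not_mem_nil, or_false]
      simp
    have hinj : Function.Injective W := by
      intro s t h
      have h1 := hc s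
      rw [h] at h1
      rw [← hoc s]
      exact hW t _ h1
    refine ⟨Finset.univ.image W, ?_, ?_, ?_⟩
    · intro H hH
      obtain ⟨s, -, rfl⟩ := Finset.mem_image.1 hH
      refine ⟨_, _, _, ?_, ?_, rfl⟩
      · simp [SimpleGraph.Walk.cons_isPath_iff, (hp s).ne, (hq s).ne, hpq s]
      · simp
    · intro H hH H' hH' hne
      obtain ⟨s, -, rfl⟩ := Finset.mem_image.1 (Finset.mem_coe.1 hH)
      obtain ⟨t, -, rfl⟩ := Finset.mem_image.1 (Finset.mem_coe.1 hH')
      rw [Set.disjoint_left]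
      intro v hv hv'
      apply hne
      rw [← hW s v hv, ← hW t v hv']
    · rw [Finset.card_image_of_injective _ hinj, Finset.card_univ]
  · rintro n ⟨P, hP, hdis, rfl⟩
    have key : ∀ H : P, ∃ s, c s ∈ H.1.verts := by
      rintro ⟨H, hH⟩
      obtain ⟨u, v, w, hw, hl, rfl⟩ := hP H hH
      match w, hw, hl with
      | .cons h1 (.cons h2 .nil), hw, _ =>
        simp only [SimpleGraph.Walk.mem_verts_toSubgraph, SimpleGraph.Walk.support_cons,
          SimpleGraph.Walk.support_nil, List.mem_cons, List.not_mem_nil, or_false]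
        apply hmeet _ _ _ h1 h2
        rintro rfl
        simp [SimpleGraph.Walk.cons_isPath_iff] at hw
    choose f hf using key
    have hfi : Function.Injective f := by
      intro H H' h
      by_contra hne
      have h1 := hdis H.2 H'.2 (fun h => hne (Subtype.ext h))
      have h2 := hf H'
      rw [← h] at h2
      exact Set.disjoint_left.1 h1 (hf H) h2
    have := Fintype.card_le_of_injective f hfi
    simpa using this

def nbr15 (N : ℕ) (x : Fin (N+1) × Fin 8) : Finset (Fin (N+1) × Fin 8) :=
  match x with
  | (i, 0) => {(i,1),(i,2),(i,3)}
  | (i, 1) => {(i,0),(i-1,5)}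
  | (i, 2) => {(i,0),(i,6)}
  | (i, 3) => {(i,0),(i,7)}
  | (i, 4) => {(i,5),(i,6),(i,7)}
  | (i, 5) => {(i,4),(i+1,1)}
  | (i, 6) => {(i,4),(i,2)}
  | (i, 7) => {(i,4),(i,3)}

theorem nbr15_symm (N : ℕ) (x y : Fin (N+1) × Fin 8) (h : y ∈ nbr15 N x) : x ∈ nbr15 N y := by
  obtain ⟨i, k⟩ := x
  obtain ⟨j, l⟩ := y
  fin_cases k <;> simp [nbr15] at h <;> rcases h with h | h | h <;> 
    (try (obtain ⟨rfl, rfl⟩ := h)) <;> simp_all [nbr15]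

theorem nbr15_irrefl (N : ℕ) (x : Fin (N+1) × Fin 8) : x ∉ nbr15 N x := by
  obtain ⟨i, k⟩ := x
  fin_cases k <;> simp [nbr15]

def G15 (N : ℕ) : SimpleGraph (Fin (N+1) × Fin 8) where
  Adj x y := y ∈ nbr15 N x
  symm := ⟨fun x y h => nbr15_symm N x y h⟩
  loopless := ⟨fun x h => nbr15_irrefl N x h⟩

theorem G15_adj (N : ℕ) (x y) : (G15 N).Adj x y ↔ y ∈ nbr15 N x := Iff.rfl

theorem G15_deg (N : ℕ) (x) : ((G15 N).neighborSet x).ncard = 2 ∨ ((G15 N).neighborSet x).ncard = 3 := by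
  have : (G15 N).neighborSet x = (nbr15 N x : Set _) := by
    ext y; simp [G15_adj]
  rw [this, Set.ncard_coe_finset]
  obtain ⟨i, k⟩ := x
  fin_cases k <;> simp [nbr15, Finset.card_insert_of_notMem]

theorem G15_conn (N : ℕ) : (G15 N).Connected := by
  have st : ∀ x y, y ∈ nbr15 N x → (G15 N).Reachable x y :=
    fun x y h => SimpleGraph.Adj.reachable ((G15_adj N x y).2 h)
  have blk : ∀ i k, (G15 N).Reachable (i, 0) (i, k) := by
    intro i k
    have h1 := st (i,0) (i,1) (by simp [nbr15])
    have h2 := st (i,0) (i,2) (by simp [nbr15])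
    have h3 := st (i,0) (i,3) (by simp [nbr15])
    have h6 := h2.trans (st (i,2) (i,6) (by simp [nbr15]))
    have h7 := h3.trans (st (i,3) (i,7) (by simp [nbr15]))
    have h4 := h6.trans (st (i,6) (i,4) (by simp [nbr15]))
    have h5 := h4.trans (st (i,4) (i,5) (by simp [nbr15]))
    fin_cases k
    exacts [SimpleGraph.Reachable.refl _, h1, h2, h3, h4, h5, h6, h7]
  have base : ∀ i, (G15 N).Reachable (0, 0) (i, 0) := by
    intro i
    induction i using Fin.induction with
    | zero => exact SimpleGraph.Reachable.refl _
    | succ i ih =>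
      refine ih.trans ((blk _ 5).trans ((st (i.castSucc, 5) (i.succ, 1) ?_).trans (blk _ 1).symm))
      simp [nbr15]
  have all : ∀ x, (G15 N).Reachable (0, 0) x := fun x => (base x.1).trans (blk x.1 x.2)
  exact { preconnected := fun x y => (all x).symm.trans (all y), nonempty := ⟨(0,0)⟩ }

def ctr15 (N : ℕ) (s : Fin (N+1) × Bool) : Fin (N+1) × Fin 8 := (s.1, if s.2 then 4 else 0)
def p15 (N : ℕ) (s : Fin (N+1) × Bool) : Fin (N+1) × Fin 8 := (s.1, if s.2 then 5 else 1)
def q15 (N : ℕ) (s : Fin (N+1) × Bool) : Fin (N+1) × Fin 8 := (s.1, if s.2 then 6 else 2)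
def own15 (N : ℕ) (x : Fin (N+1) × Fin 8) : Fin (N+1) × Bool := (x.1, decide (4 ≤ x.2))

theorem G15_meet (N : ℕ) (u v w) (h1 : (G15 N).Adj u v) (h2 : (G15 N).Adj v w) (hne : u ≠ w) :
    ∃ s, ctr15 N s = u ∨ ctr15 N s = v ∨ ctr15 N s = w := by
  have hc : ∀ x : Fin (N+1) × Fin 8, (x.2 = 0 ∨ x.2 = 4) → ∃ s, ctr15 N s = x := by
    rintro ⟨i, k⟩ (h | h)
    · exact ⟨(i, false), by simp_all [ctr15]⟩
    · exact ⟨(i, true), by simp_all [ctr15]⟩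
  have : (u.2 = 0 ∨ u.2 = 4) ∨ (v.2 = 0 ∨ v.2 = 4) ∨ (w.2 = 0 ∨ w.2 = 4) := by
    have h1' := (G15_adj N _ _).1 h1.symm
    have h2' := (G15_adj N _ _).1 h2
    obtain ⟨j, l⟩ := v
    fin_cases l <;> simp [nbr15] at h1' h2' ⊢ <;>
      rcases h1' with h1' | h1' <;> rcases h2' with h2' | h2' <;> simp_all
  rcases this with h | h | h
  · exact (hc u h).imp fun s hs => Or.inl hs
  · exact (hc v h).imp fun s hs => Or.inr (Or.inl hs)
  · exact (hc w h).imp fun s hs => Or.inr (Or.inr hs)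

/-- For every `N` there exists a finite simple connected graph `G` with
`v(G) ≥ N`, every vertex of degree 2 or 3, `v(G) ≠ 5`, and `λ(G) = v(G)/4`. -/
theorem stmt_15 (N : ℕ) :
    ∃ (n : ℕ) (G : SimpleGraph (Fin n)),
      N ≤ n ∧ G.Connected ∧
      (∀ v : Fin n, (G.neighborSet v).ncard = 2 ∨ (G.neighborSet v).ncard = 3) ∧
      n ≠ 5 ∧
      (G.lambdaK 2 : ℚ) = (n : ℚ) / 4 := by
  let e : Fin ((N+1)*8) ≃ Fin (N+1) × Fin 8 := finProdFinEquiv.symm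
  let φ : (G15 N).comap e ≃g G15 N := SimpleGraph.Iso.comap e (G15 N)
  refine ⟨(N+1)*8, (G15 N).comap e, by omega, φ.connected_iff.2 (G15_conn N), ?_, by omega, ?_⟩
  · intro v
    have : (((G15 N).comap e).neighborSet v).ncard = ((G15 N).neighborSet (e v)).ncard :=
      Nat.card_congr (φ.mapNeighborSet v)
    rw [this]
    exact G15_deg N _
  · rw [lambda_eq_of_centers ((G15 N).comap e) (fun s => e.symm (ctr15 N s))
      (fun s => e.symm (p15 N s)) (fun s => e.symm (q15 N s)) (fun x => own15 N (e x))]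
    · simp; ring
    · rintro ⟨i, _ | _⟩ <;> simp [own15, ctr15]
    · rintro ⟨i, _ | _⟩ <;> simp [own15, p15]
    · rintro ⟨i, _ | _⟩ <;> simp [own15, q15]
    · rintro ⟨i, _ | _⟩ <;> simp [p15, ctr15, G15_adj, nbr15]
    · rintro ⟨i, _ | _⟩ <;> simp [q15, ctr15, G15_adj, nbr15]
    · rintro ⟨i, _ | _⟩ <;> simp [p15, q15]
    · intro u v w h1 h2 hne
      obtain ⟨s, hs⟩ := G15_meet N (e u) (e v) (e w) h1 h2 (fun h => hne (e.injective h))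
      exact ⟨s, by simpa [Equiv.symm_apply_eq] using hs⟩
end

section
/- For all integers s ≥ 3 and k ≥ 2 and every natural number N there exists a finite simple connected graph G with v(G) ≥ N such that every vertex of G has degree at least 1 and at most s, v(G) ≠ k, and τ_k(G) = (v(G) − k)/(sk − k + 1). -/
namespace TK

def L (M k : ℕ) : ℕ := M * k + 1

def p (M k v : ℕ) : ℕ :=
  if v < k then v - 1 else if (v - k) % L M k = 0 then v - 1
  else if ((v - k) % L M k - 1) % k = 0 then v - (v - k) % L M k else v - 1

def st (M k v : ℕ) : ℕ := if v < k then 0 else v - ((v - k) % L M k - 1) % k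

def C (M k v : ℕ) : Prop := k ≤ v ∧ (v - k) % L M k = 0

theorem decomp (M k : ℕ) (hk : 2 ≤ k) (v : ℕ) : v < k ∨ (∃ i, v = k + L M k * i) ∨
    ∃ i j t, j < M ∧ t < k ∧ v = k + L M k * i + (1 + k * j + t) := by
  by_cases h : v < k
  · exact Or.inl h
  right
  have h1 := Nat.div_add_mod (v - k) (L M k)
  have h2 : (v - k) % L M k < L M k := Nat.mod_lt _ (by simp [L])
  by_cases h0 : (v - k) % L M k = 0
  · left; exact ⟨(v - k) / L M k, by omega⟩
  right
  have h3 := Nat.div_add_mod ((v - k) % L M k - 1) k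
  have h4 : ((v - k) % L M k - 1) % k < k := Nat.mod_lt _ (by omega)
  refine ⟨(v - k) / L M k, ((v - k) % L M k - 1) / k, ((v - k) % L M k - 1) % k, ?_, h4, by omega⟩
  rw [Nat.div_lt_iff_lt_mul (by omega)]
  have : L M k = M * k + 1 := rfl
  omega

theorem qlt {M k j t : ℕ} (hj : j < M) (ht : t < k) : 1 + k * j + t < L M k := by
  have : k * (j + 1) ≤ k * M := Nat.mul_le_mul_left _ hj
  have h2 : L M k = M * k + 1 := rfl
  rw [Nat.mul_comm M k] at h2
  rw [Nat.mul_add] at this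
  omega

theorem modL {M k i q : ℕ} (h : q < L M k) : (k + L M k * i + q - k) % L M k = q := by
  have : k + L M k * i + q - k = L M k * i + q := by omega
  rw [this, Nat.mul_add_mod, Nat.mod_eq_of_lt h]

theorem modL0 {M k i : ℕ} : (k + L M k * i - k) % L M k = 0 := by
  have : k + L M k * i - k = L M k * i := by omega
  rw [this, Nat.mul_mod_right]

theorem modk {k j t : ℕ} (h : t < k) : (1 + k * j + t - 1) % k = t := by
  have : 1 + k * j + t - 1 = k * j + t := by omega
  rw [this, Nat.mul_add_mod, Nat.mod_eq_of_lt h]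

theorem p_small {M k v : ℕ} (h : v < k) : p M k v = v - 1 := by simp [p, h]

theorem p_center {M k i : ℕ} : p M k (k + L M k * i) = k + L M k * i - 1 := by
  unfold p; rw [modL0]; simp

theorem p_zero {M k i j : ℕ} (hk : 2 ≤ k) (hj : j < M) :
    p M k (k + L M k * i + (1 + k * j + 0)) = k + L M k * i := by
  unfold p; rw [modL (qlt hj (by omega)), modk (by omega)]
  rw [if_neg (by omega), if_neg (by omega), if_pos rfl]; omega

theorem p_succ {M k i j t : ℕ} (hj : j < M) (ht : t + 1 < k) :
    p M k (k + L M k * i + (1 + k * j + (t + 1))) = k + L M k * i + (1 + k * j + t) := by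
  unfold p; rw [modL (qlt hj (by omega)), modk (by omega)]
  rw [if_neg (by omega), if_neg (by omega), if_neg (by omega)]; omega

theorem st_small {M k v : ℕ} (h : v < k) : st M k v = 0 := by simp [st, h]

theorem st_big {M k i j t : ℕ} (hj : j < M) (ht : t < k) :
    st M k (k + L M k * i + (1 + k * j + t)) = k + L M k * i + (1 + k * j) := by
  unfold st; rw [modL (qlt hj (by omega)), modk (by omega)]
  rw [if_neg (by omega)]; omega

theorem C_center {M k i : ℕ} : C M k (k + L M k * i) := ⟨by omega, modL0⟩

theorem p_lt {M k v : ℕ} (hk : 2 ≤ k) (hv : v ≠ 0) : p M k v < v := by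
  unfold p; split_ifs <;> omega

theorem st_le {M k v : ℕ} : st M k v ≤ v := by
  unfold st; split_ifs <;> omega

theorem lt_st {M k v : ℕ} (hk : 2 ≤ k) : v < st M k v + k := by
  have := Nat.mod_lt ((v - k) % L M k - 1) (show 0 < k by omega)
  unfold st; split_ifs <;> omega

theorem st_p {M k v : ℕ} (hk : 2 ≤ k) (hv : v ≠ 0) (h1 : ¬ C M k v) (h2 : ¬ C M k (p M k v)) :
    st M k (p M k v) = st M k v := by
  rcases decomp M k hk v with h | ⟨i, rfl⟩ | ⟨i, j, t, hj, ht, rfl⟩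
  · rw [p_small h, st_small h, st_small (by omega)]
  · exact absurd C_center h1
  · rcases t with _ | t
    · rw [p_zero hk hj] at h2; exact absurd C_center h2
    · rw [p_succ hj ht, st_big hj ht, st_big hj (by omega)]

/-- children of `a` -/
theorem child {M k v : ℕ} (hk : 2 ≤ k) (hv : v ≠ 0) :
    v = p M k v + 1 ∨ (C M k (p M k v) ∧ ∃ j < M, v = p M k v + 1 + k * j) := by
  rcases decomp M k hk v with h | ⟨i, rfl⟩ | ⟨i, j, t, hj, ht, rfl⟩
  · rw [p_small h]; omega
  · rw [p_center]; omega
  · rcases t with _ | t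
    · rw [p_zero hk hj]; exact Or.inr ⟨C_center, j, hj, by omega⟩
    · rw [p_succ hj ht]; omega

theorem p_C {M k v : ℕ} (hk : 2 ≤ k) (h : C M k v) : p M k v = v - 1 := by
  unfold p; rw [if_neg (by have := h.1; omega), if_pos h.2]

/-- in the block path -/
theorem p_path {M k i j : ℕ} (hM : 1 ≤ M) (hk : 2 ≤ k) (hj : j < k) :
    p M k (k + L M k * i + j + 1) = k + L M k * i + j := by
  rcases j with _ | j
  · have := p_zero (i := i) hk (show 0 < M by omega)
    simpa using this
  · have := p_succ (i := i) (show 0 < M by omega) hj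
    convert this using 2 <;> ring

def G (M k n : ℕ) (hk : 2 ≤ k) : SimpleGraph (Fin n) where
  Adj a b := (a.val ≠ 0 ∧ p M k a = b) ∨ (b.val ≠ 0 ∧ p M k b = a)
  symm := ⟨fun a b h => h.symm⟩
  loopless := ⟨fun a h => by
    rcases h with h | h <;> exact absurd h.2 (p_lt hk h.1).ne⟩

theorem G_conn (M k n : ℕ) (hk : 2 ≤ k) (hn : 0 < n) : (G M k n hk).Connected := by
  have key : ∀ v (h : v < n), (G M k n hk).Reachable ⟨v, h⟩ ⟨0, hn⟩ := by
    intro v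
    induction v using Nat.strong_induction_on with
    | _ v ih =>
      intro h
      by_cases hv : v = 0
      · subst hv; exact SimpleGraph.Reachable.refl _
      have hp := p_lt (M := M) hk hv
      have : (G M k n hk).Adj ⟨v, h⟩ ⟨p M k v, hp.trans h⟩ := Or.inl ⟨hv, rfl⟩
      exact this.reachable.trans (ih _ hp _)
  haveI : Nonempty (Fin n) := ⟨⟨0, hn⟩⟩
  exact ⟨fun a b => (key a.1 a.2).trans (key b.1 b.2).symm⟩

theorem G_deg_le (M k n : ℕ) (hM : 2 ≤ M) (hk : 2 ≤ k) (v : Fin n) :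
    ((G M k n hk).neighborSet v).ncard ≤ M + 1 := by
  classical
  have key : ∃ T : Finset ℕ, T.card ≤ M + 1 ∧ ∀ w ∈ (G M k n hk).neighborSet v, w.val ∈ T := by
    by_cases hC : C M k v
    · refine ⟨insert (v.val - 1) ((Finset.range M).image fun j => v.val + 1 + k * j), ?_, ?_⟩
      · refine (Finset.card_insert_le _ _).trans ?_
        have := Finset.card_image_le (s := Finset.range M) (f := fun j => v.val + 1 + k * j)
        simp only [Finset.card_range] at this
        omega
      · intro w hw
        rcases hw with ⟨_, h⟩ | ⟨h0, h⟩
        · rw [p_C hk hC] at h; simp [h]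
        · rcases child (M := M) hk h0 with h1 | ⟨_, j, hj, h1⟩
          · rw [h] at h1
            exact Finset.mem_insert_of_mem (Finset.mem_image.2 ⟨0, by simp; omega, by simp [h1]⟩)
          · rw [h] at h1
            exact Finset.mem_insert_of_mem (Finset.mem_image.2 ⟨j, by simpa using hj, h1.symm⟩)
    · refine ⟨{p M k v, v.val + 1}, Finset.card_le_two.trans (by omega), ?_⟩
      intro w hw
      rcases hw with ⟨_, h⟩ | ⟨h0, h⟩
      · simp [h]
      · rcases child (M := M) hk h0 with h1 | ⟨h2, _⟩
        · rw [h] at h1; simp [h1]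
        · rw [h] at h2; exact absurd h2 hC
  obtain ⟨T, hT, h⟩ := key
  refine le_trans ?_ hT
  rw [← Set.ncard_coe_finset T]
  exact Set.ncard_le_ncard_of_injOn (fun w : Fin n => w.val) h (Fin.val_injective.injOn) T.finite_toSet

theorem G_deg_pos (M k n : ℕ) (hk : 2 ≤ k) (hn : k ≤ n) (v : Fin n) :
    1 ≤ ((G M k n hk).neighborSet v).ncard := by
  rw [Nat.one_le_iff_ne_zero, ← Nat.pos_iff_ne_zero, Set.ncard_pos]
  by_cases hv : v.val = 0
  · refine ⟨⟨1, by omega⟩, Or.inr ⟨one_ne_zero, ?_⟩⟩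
    rw [hv]; simp [p_small (M := M) (show 1 < k by omega)]
  · exact ⟨⟨p M k v, (p_lt hk hv).trans v.2⟩, Or.inl ⟨hv, rfl⟩⟩

theorem tree_ncard {n k : ℕ} {G : SimpleGraph (Fin n)} (H : G.Subgraph) :
    H.IsKEdgeTree k ↔ H.Connected ∧ H.edgeSet.ncard = k ∧ H.verts.ncard = k + 1 := by
  have h : H.edgeSet.ncard = Nat.card H.coe.edgeSet := by
    rw [← SimpleGraph.Subgraph.image_coe_edgeSet_coe, Set.ncard_image_of_injective _
      (Sym2.map.injective Subtype.val_injective)]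
    rfl
  unfold SimpleGraph.Subgraph.IsKEdgeTree
  rw [SimpleGraph.isTree_iff_connected_and_card, SimpleGraph.Subgraph.connected_iff']
  rw [← h]
  have : Nat.card H.verts = H.verts.ncard := rfl
  rw [this]
  constructor
  · rintro ⟨⟨a, b⟩, c⟩; exact ⟨a, c, by omega⟩
  · rintro ⟨a, b, c⟩; exact ⟨⟨a, by omega⟩, b⟩

theorem has_center {M k n : ℕ} (hk : 2 ≤ k) (H : (G M k n hk).Subgraph) (hH : H.IsKEdgeTree k) :
    ∃ v ∈ H.verts, C M k v.val := by
  by_contra! hc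
  obtain ⟨h1, -, h3⟩ := (tree_ncard H).1 hH
  have hst : ∀ a b : Fin n, H.Adj a b → st M k a = st M k b := by
    intro a b hab
    have ha := hc a (H.edge_vert hab)
    have hb := hc b (H.edge_vert hab.symm)
    rcases hab.adj_sub with ⟨h0, h⟩ | ⟨h0, h⟩
    · rw [← h] at hb ⊢; exact (st_p hk h0 ha hb).symm
    · rw [← h] at ha ⊢; exact st_p hk h0 hb ha
  have hreach : ∀ a b : H.verts, H.coe.Reachable a b → st M k a.1 = st M k b.1 := by
    rintro a b ⟨w⟩
    induction w with
    | nil => rfl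
    | cons h _ ih => exact (hst _ _ h).trans ih
  rw [SimpleGraph.Subgraph.connected_iff'] at h1
  obtain ⟨v0⟩ := h1.nonempty
  have hsub : ∀ w ∈ H.verts, w.val ∈ (Finset.Ico (st M k v0.1) (st M k v0.1 + k) : Finset ℕ) := by
    intro w hw
    rw [hreach v0 ⟨w, hw⟩ (h1.preconnected _ _)]
    exact Finset.mem_Ico.2 ⟨st_le, lt_st hk⟩
  have := Set.ncard_le_ncard_of_injOn (fun w : Fin n => w.val) hsub (Fin.val_injective.injOn)
    (Finset.finite_toSet _)
  rw [Set.ncard_coe_finset] at this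
  simp at this
  omega

theorem upper {M k m : ℕ} (hk : 2 ≤ k) (P : Finset (G M k (k + L M k * m) hk).Subgraph)
    (h1 : ∀ H ∈ P, H.IsKEdgeTree k)
    (h2 : (P : Set (G M k (k + L M k * m) hk).Subgraph).Pairwise
      (fun H H' => Disjoint H.verts H'.verts)) : P.card ≤ m := by
  classical
  have : Nonempty (Fin (k + L M k * m)) := ⟨⟨0, by omega⟩⟩
  choose! f hf hC using fun H hH => has_center hk H (h1 H hH)
  have hL : 0 < L M k := by simp [L]
  refine le_of_le_of_eq ?_ (Finset.card_range m)
  refine Finset.card_le_card_of_injOn (fun H => ((f H).val - k) / L M k) ?_ ?_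
  · intro H hH
    have := (f H).2
    have := (hC H hH).1
    simp only [Finset.coe_range, Set.mem_Iio]
    rw [Nat.div_lt_iff_lt_mul hL]
    have := Nat.mul_comm m (L M k)
    omega
  · intro H hH H' hH' he
    by_contra hne
    refine Set.disjoint_left.1 (h2 hH hH' hne) (hf H hH) ?_
    have e : f H = f H' := by
      have a := Nat.div_add_mod ((f H).val - k) (L M k)
      have b := Nat.div_add_mod ((f H').val - k) (L M k)
      obtain ⟨c1, c2⟩ := hC H hH
      obtain ⟨d1, d2⟩ := hC H' hH'
      simp only at he
      rw [he] at a
      apply Fin.ext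
      omega
    rw [e]; exact hf H' hH'

theorem bnd {M k m : ℕ} (hM : 2 ≤ M) (i : Fin m) :
    k + L M k * i.val + k < k + L M k * m := by
  have h : L M k * (i.val + 1) ≤ L M k * m := Nat.mul_le_mul_left _ i.2
  have h2 : L M k = M * k + 1 := rfl
  have h3 : 1 * k ≤ M * k := Nat.mul_le_mul_right _ (by omega)
  rw [Nat.mul_add] at h
  omega

def T (M k m : ℕ) (hM : 2 ≤ M) (hk : 2 ≤ k) (i : Fin m) :
    (G M k (k + L M k * m) hk).Subgraph where
  verts := {v | k + L M k * i ≤ v.val ∧ v.val ≤ k + L M k * i + k}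
  Adj a b := (k + L M k * i ≤ a.val ∧ a.val ≤ k + L M k * i + k) ∧
    (k + L M k * i ≤ b.val ∧ b.val ≤ k + L M k * i + k) ∧ (b.val = a.val + 1 ∨ a.val = b.val + 1)
  adj_sub := by
    rintro a b ⟨⟨h1, h2⟩, ⟨h3, h4⟩, h | h⟩
    · right
      refine ⟨by omega, ?_⟩
      have := p_path (M := M) (k := k) (i := i) (j := a.val - (k + L M k * i)) (by omega) hk (by omega)
      rw [h]; convert this using 2 <;> omega
    · left
      refine ⟨by omega, ?_⟩
      have := p_path (M := M) (k := k) (i := i) (j := b.val - (k + L M k * i)) (by omega) hk (by omega)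
      rw [h]; convert this using 2 <;> omega
  edge_vert := fun h => h.1
  symm := ⟨fun a b h => ⟨h.2.1, h.1, h.2.2.symm⟩⟩

def vx (M k m : ℕ) (hM : 2 ≤ M) (i : Fin m) (j : Fin (k + 1)) : Fin (k + L M k * m) :=
  ⟨k + L M k * i + j, by have := bnd (k := k) hM i; omega⟩

theorem T_tree (M k m : ℕ) (hM : 2 ≤ M) (hk : 2 ≤ k) (i : Fin m) :
    (T M k m hM hk i).IsKEdgeTree k := by
  rw [tree_ncard]
  have hb := bnd (k := k) hM i
  refine ⟨?_, ?_, ?_⟩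
  · rw [SimpleGraph.Subgraph.connected_iff']
    have key : ∀ j (h : j ≤ k), (T M k m hM hk i).coe.Reachable
        ⟨⟨k + L M k * i + j, by omega⟩, by constructor <;> simp <;> omega⟩
        ⟨⟨k + L M k * i, by omega⟩, by constructor <;> simp⟩ := by
      intro j
      induction j with
      | zero => intro _; exact SimpleGraph.Reachable.refl _
      | succ j ih =>
        intro h
        refine SimpleGraph.Reachable.trans (SimpleGraph.Adj.reachable ?_) (ih (by omega))
        refine ⟨?_, ?_, ?_⟩
        · simp only; omega
        · simp only; omega
        · right; simp only; omega
    have key2 : ∀ a : (T M k m hM hk i).verts, (T M k m hM hk i).coe.Reachable a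
        ⟨⟨k + L M k * i, by omega⟩, by constructor <;> simp⟩ := by
      rintro ⟨⟨a, ha⟩, h1, h2⟩
      simp only at h1 h2
      obtain ⟨j, rfl⟩ := Nat.exists_eq_add_of_le h1
      exact key j (by omega)
    haveI : Nonempty (T M k m hM hk i).verts :=
      ⟨⟨⟨k + L M k * i, by omega⟩, by constructor <;> simp⟩⟩
    exact ⟨fun a b => (key2 a).trans (key2 b).symm⟩
  · have : (T M k m hM hk i).edgeSet = Set.range fun j : Fin k =>
        s(vx M k m hM i j.castSucc, vx M k m hM i j.succ) := by
      ext e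
      induction e using Sym2.ind with
      | _ a b =>
        rw [SimpleGraph.Subgraph.mem_edgeSet]
        constructor
        · rintro ⟨⟨h1, h2⟩, ⟨h3, h4⟩, h | h⟩
          · refine ⟨⟨a.val - (k + L M k * i), by omega⟩, ?_⟩
            simp only [Sym2.eq_iff, vx, Fin.ext_iff, Fin.val_castSucc, Fin.val_succ]
            omega
          · refine ⟨⟨b.val - (k + L M k * i), by omega⟩, ?_⟩
            simp only [Sym2.eq_iff, vx, Fin.ext_iff, Fin.val_castSucc, Fin.val_succ]
            omega
        · rintro ⟨j, hj⟩
          have := j.2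
          simp only [Sym2.eq_iff, vx, Fin.ext_iff, Fin.val_castSucc, Fin.val_succ] at hj
          simp only [T]
          omega
    rw [this, ← Set.image_univ, Set.ncard_image_of_injective, Set.ncard_univ]
    · simp
    · intro a b h
      simp only [Sym2.eq_iff, vx, Fin.ext_iff, Fin.val_castSucc, Fin.val_succ] at h
      apply Fin.ext
      omega
  · have : (T M k m hM hk i).verts = Set.range (vx M k m hM i) := by
      ext a
      constructor
      · rintro ⟨h1, h2⟩
        refine ⟨⟨a.val - (k + L M k * i), by omega⟩, ?_⟩
        simp only [vx, Fin.ext_iff]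
        omega
      · rintro ⟨j, rfl⟩
        have := j.2
        constructor <;> simp only [vx] <;> omega
    rw [this, ← Set.image_univ, Set.ncard_image_of_injective, Set.ncard_univ]
    · simp
    · intro a b h
      simp only [vx, Fin.ext_iff] at h
      apply Fin.ext
      omega

theorem T_disj (M k m : ℕ) (hM : 2 ≤ M) (hk : 2 ≤ k) (i i' : Fin m) (h : i ≠ i') :
    Disjoint (T M k m hM hk i).verts (T M k m hM hk i').verts := by
  rw [Set.disjoint_left]
  rintro a ⟨h1, h2⟩ ⟨h3, h4⟩
  have e1 := bnd (k := k) hM (⟨i, Nat.lt_succ_self i⟩ : Fin (i + 1))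
  have key : ∀ x y : ℕ, x < y → k + L M k * x + k < k + L M k * y := fun x y hxy =>
    bnd (k := k) hM (⟨x, hxy⟩ : Fin y)
  rcases lt_or_gt_of_ne (fun e => h (Fin.ext e) : i.val ≠ i'.val) with h5 | h5
  · have := key _ _ h5; omega
  · have := key _ _ h5; omega

theorem tau (M k m : ℕ) (hM : 2 ≤ M) (hk : 2 ≤ k) :
    (G M k (k + L M k * m) hk).tauK k = m := by
  classical
  apply IsGreatest.csSup_eq
  constructor
  · refine ⟨Finset.univ.image (T M k m hM hk), ?_, ?_, ?_⟩
    · intro H hH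
      obtain ⟨i, -, rfl⟩ := Finset.mem_image.1 hH
      exact T_tree M k m hM hk i
    · intro H hH H' hH' hne
      obtain ⟨i, -, rfl⟩ := Finset.mem_image.1 hH
      obtain ⟨i', -, rfl⟩ := Finset.mem_image.1 hH'
      exact T_disj M k m hM hk i i' (fun e => hne (by rw [e]))
    · rw [Finset.card_image_of_injective, Finset.card_univ, Fintype.card_fin]
      intro i i' h
      by_contra hne
      have := T_disj M k m hM hk i i' hne
      rw [h] at this
      have h2 : vx M k m hM i' 0 ∈ (T M k m hM hk i').verts := by
        constructor <;> simp [vx]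
      exact Set.disjoint_left.1 this h2 h2
  · rintro x ⟨P, h1, h2, rfl⟩
    exact upper hk P h1 h2

end TK

/-- For all `s ≥ 3`, `k ≥ 2` and every `N` there exists a finite simple connected
graph `G` with `v(G) ≥ N`, all vertex degrees between 1 and `s`, `v(G) ≠ k`, and
`τ_k(G) = (v(G) − k)/(sk − k + 1)`. -/
theorem stmt_16 (s k : ℕ) (hs : 3 ≤ s) (hk : 2 ≤ k) (N : ℕ) :
    ∃ (n : ℕ) (G : SimpleGraph (Fin n)),
      N ≤ n ∧ G.Connected ∧
      (∀ v : Fin n, 1 ≤ (G.neighborSet v).ncard ∧ (G.neighborSet v).ncard ≤ s) ∧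
      n ≠ k ∧
      (G.tauK k : ℚ) = ((n : ℚ) - k) / (s * k - k + 1) := by
  obtain ⟨M, rfl⟩ : ∃ M, s = M + 1 := ⟨s - 1, by omega⟩
  have hM : 2 ≤ M := by omega
  have hL : 1 ≤ TK.L M k := by simp [TK.L]
  have h1 : 1 * (N + 1) ≤ TK.L M k * (N + 1) := Nat.mul_le_mul_right _ hL
  refine ⟨k + TK.L M k * (N + 1), TK.G M k _ hk, by omega, TK.G_conn _ _ _ hk (by omega), ?_,
    by omega, ?_⟩
  · exact fun v => ⟨TK.G_deg_pos _ _ _ hk (by omega) v, TK.G_deg_le _ _ _ hM hk v⟩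
  · rw [TK.tau M k (N + 1) hM hk]
    have h0 : ((M + 1 : ℕ) : ℚ) * k - k + 1 ≠ 0 := by
      have : ((M + 1 : ℕ) : ℚ) * k - k + 1 = M * k + 1 := by push_cast; ring
      rw [this]; positivity
    rw [eq_div_iff h0]
    simp only [TK.L]
    push_cast
    ring
end

section
/- Let s ≥ 3 and k ≥ 1 be integers and let T be a finite tree with maximum degree at most s and v(T) ≥ k + 1. Then τ_k(T) ≥ (v(T) − k)/(sk − k + 1). -/
open Classical in
theorem aux_tree {V : Type} [Fintype V] (T : SimpleGraph V) (hT : T.IsTree) (k : ℕ)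
    (r : V) (p : V → V) (d : V → ℕ) (hadj : ∀ v, v ≠ r → T.Adj v (p v))
    (hd : ∀ v, v ≠ r → d (p v) < d v) (v : V) (B : Finset V) (hB : B.card = k + 1)
    (hv : v ∈ B) (hcl : ∀ x ∈ B, x ≠ v → p x ∈ B ∧ x ≠ r) :
    ((⊤ : T.Subgraph).induce (B : Set V)).IsKEdgeTree k := by
  set H := (⊤ : T.Subgraph).induce (B : Set V) with hH
  have hreach : ∀ n : ℕ, ∀ x (hx : x ∈ B), d x = n →
      H.coe.Reachable ⟨v, by simpa [hH] using hv⟩ ⟨x, by simpa [hH] using hx⟩ := by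
    intro n
    induction n using Nat.strong_induction_on with
    | _ n ih =>
      intro x hx hn
      by_cases hxv : x = v
      · subst hxv; exact SimpleGraph.Reachable.refl _
      · obtain ⟨h1, h2⟩ := hcl x hx hxv
        refine (ih (d (p x)) (hn ▸ hd x h2) (p x) h1 rfl).trans ?_
        apply SimpleGraph.Adj.reachable
        simp only [SimpleGraph.Subgraph.coe_adj, hH, SimpleGraph.Subgraph.induce_adj]
        exact ⟨h1, hx, by simpa using (hadj x h2).symm⟩
  have htree : H.coe.IsTree := by
    refine ⟨?_, hT.2.subgraph H⟩
    rw [SimpleGraph.connected_iff_exists_forall_reachable]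
    exact ⟨⟨v, by simpa [hH] using hv⟩, fun ⟨x, hx⟩ => hreach _ x (by simpa [hH] using hx) rfl⟩
  refine ⟨htree, ?_⟩
  have h1 := htree.card_edgeFinset
  have h2 : Fintype.card H.verts = k + 1 := by
    rw [← hB, ← Nat.card_eq_fintype_card]
    simp [hH]
  rw [← SimpleGraph.Subgraph.image_coe_edgeSet_coe,
    Set.ncard_image_of_injective _ (Sym2.map.injective Subtype.val_injective),
    ← SimpleGraph.coe_edgeFinset, Set.ncard_coe_finset]
  omega

theorem aux_shrink {V : Type} (k : ℕ) (r : V) (p : V → V) (d : V → ℕ)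
    (hd : ∀ v, v ≠ r → d (p v) < d v) (v : V) (n : ℕ) : ∀ (B : Finset V), B.card = k + 1 + n →
    v ∈ B → (∀ x ∈ B, x ≠ v → p x ∈ B ∧ x ≠ r) →
    ∃ C ⊆ B, C.card = k + 1 ∧ v ∈ C ∧ (∀ x ∈ C, x ≠ v → p x ∈ C ∧ x ≠ r) := by
  classical
  induction n with
  | zero => intro B h1 h2 h3; exact ⟨B, subset_rfl, h1, h2, h3⟩
  | succ n ih =>
    intro B h1 h2 h3
    have hne : (B.erase v).Nonempty := by
      rw [← Finset.card_pos, Finset.card_erase_of_mem h2]; omega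
    obtain ⟨y, hy, hmax⟩ := Finset.exists_max_image (B.erase v) d hne
    rw [Finset.mem_erase] at hy
    obtain ⟨C, hC, h4⟩ := ih (B.erase y) (by rw [Finset.card_erase_of_mem hy.2]; omega)
      (Finset.mem_erase.2 ⟨hy.1.symm, h2⟩) (by
        intro x hx hxv
        rw [Finset.mem_erase] at hx
        obtain ⟨h5, h6⟩ := h3 x hx.2 hxv
        refine ⟨Finset.mem_erase.2 ⟨?_, h5⟩, h6⟩
        intro h
        have := hmax x (Finset.mem_erase.2 ⟨hxv, hx.2⟩)
        have := hd x h6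
        rw [h] at this
        omega)
    exact ⟨C, hC.trans (Finset.erase_subset _ _), h4⟩

open Classical in
theorem aux_main {V : Type} [Fintype V] (T : SimpleGraph V) (hT : T.IsTree) (k m : ℕ)
    (r : V) (p : V → V) (d : V → ℕ) (hr : p r = r) (hadj : ∀ v, v ≠ r → T.Adj v (p v))
    (hd : ∀ v, v ≠ r → d (p v) < d v)
    (hch : ∀ v, (Finset.univ.filter (fun c => p c = v ∧ c ≠ r)).card ≤ m) (n : ℕ) :
    ∀ S : Finset V, S.card = n → (∀ x ∈ S, p x ∈ S) →
    ∃ P : Finset T.Subgraph, (∀ H ∈ P, H.IsKEdgeTree k) ∧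
      (P : Set T.Subgraph).Pairwise (fun H H' => Disjoint H.verts H'.verts) ∧
      (∀ H ∈ P, H.verts ⊆ (S : Set V)) ∧ S.card ≤ P.card * (m * k + 1) + k := by
  induction n using Nat.strong_induction_on with
  | _ n ih =>
  intro S hSn hS
  by_cases hle : S.card ≤ k
  · exact ⟨∅, by simp, by simp, by simp, by simpa using hle⟩
  have hSi : ∀ i, ∀ x ∈ S, p^[i] x ∈ S := by
    intro i
    induction i with
    | zero => intro x hx; exact hx
    | succ i ih => intro x hx; rw [Function.iterate_succ_apply]; exact ih _ (hS x hx)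
  have hroot : ∀ n x, d x = n → ∃ i, p^[i] x = r := by
    intro n
    induction n using Nat.strong_induction_on with
    | _ n ih =>
      intro x hx
      by_cases hxr : x = r
      · exact ⟨0, hxr⟩
      · obtain ⟨i, hi⟩ := ih _ (hx ▸ hd x hxr) (p x) rfl
        exact ⟨i + 1, by rw [Function.iterate_succ_apply]; exact hi⟩
  have hrr : ∀ i, p^[i] r = r := fun i => Function.iterate_fixed hr i
  let D : V → Finset V := fun v => S.filter (fun x => ∃ i, p^[i] x = v)
  have hDr : D r = S := by
    apply Finset.filter_true_of_mem
    intro x _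
    exact hroot _ x rfl
  obtain ⟨v, hv, hmax⟩ := Finset.exists_max_image
    (Finset.univ.filter (fun v => k + 1 ≤ (D v).card)) d
    ⟨r, by simp only [Finset.mem_filter, Finset.mem_univ, true_and, hDr]; omega⟩
  simp only [Finset.mem_filter, Finset.mem_univ, true_and] at hv hmax
  have hvS : v ∈ S := by
    obtain ⟨x, hx⟩ : (D v).Nonempty := by rw [← Finset.card_pos]; omega
    obtain ⟨h1, i, hi⟩ := Finset.mem_filter.1 hx
    exact hi ▸ hSi i x h1
  have hvD : v ∈ D v := Finset.mem_filter.2 ⟨hvS, 0, rfl⟩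
  have hdec : ∀ i x, p^[i] x = v → x = v ∨ ∃ c, (p c = v ∧ c ≠ r) ∧ ∃ j, p^[j] x = c := by
    intro i
    induction i with
    | zero => intro x hx; exact Or.inl hx
    | succ i ih =>
      intro x hx
      rw [Function.iterate_succ_apply'] at hx
      by_cases h : p^[i] x = r
      · exact ih x (by rw [h, hr] at hx; rw [h, hx])
      · exact Or.inr ⟨_, ⟨hx, h⟩, i, rfl⟩
  have hDcard : (D v).card ≤ m * k + 1 := by
    have hsub : D v ⊆ insert v
        ((Finset.univ.filter (fun c => p c = v ∧ c ≠ r)).biUnion D) := by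
      intro x hx
      obtain ⟨h1, i, hi⟩ := Finset.mem_filter.1 hx
      rcases hdec i x hi with h | ⟨c, hc, hj⟩
      · simp [h]
      · refine Finset.mem_insert_of_mem (Finset.mem_biUnion.2 ⟨c, by simpa using hc, ?_⟩)
        exact Finset.mem_filter.2 ⟨h1, hj⟩
    have h1 : ((Finset.univ.filter (fun c => p c = v ∧ c ≠ r)).biUnion D).card ≤ m * k := by
      refine (Finset.card_biUnion_le_card_mul _ _ k ?_).trans (Nat.mul_le_mul_right k (hch v))
      intro c hc
      simp only [Finset.mem_filter, Finset.mem_univ, true_and] at hc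
      by_contra hlt
      have h2 := hmax c (by omega)
      have h3 := hd c hc.2
      rw [hc.1] at h3
      omega
    have := Finset.card_le_card hsub
    have := Finset.card_insert_le v
      ((Finset.univ.filter (fun c => p c = v ∧ c ≠ r)).biUnion D)
    omega
  obtain ⟨C, hCD, hCc, hvC, hCcl⟩ := aux_shrink k r p d hd v ((D v).card - (k + 1)) (D v)
    (by omega) hvD (by
      intro x hx hxv
      obtain ⟨h1, i, hi⟩ := Finset.mem_filter.1 hx
      constructor
      · refine Finset.mem_filter.2 ⟨hS x h1, ?_⟩
        cases i with
        | zero => exact absurd hi hxv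
        | succ i => exact ⟨i, by rw [Function.iterate_succ_apply] at hi; exact hi⟩
      · rintro rfl
        exact hxv (by rw [← hi, hrr]))
  have hH := aux_tree T hT k r p d hadj hd v C hCc hvC hCcl
  have hDS : D v ⊆ S := Finset.filter_subset _ _
  have hcs := Finset.card_sdiff_add_card_eq_card hDS
  obtain ⟨P, hP1, hP2, hP3, hP4⟩ := ih (S \ D v).card (by omega) (S \ D v) rfl (by
    intro x hx
    rw [Finset.mem_sdiff] at hx ⊢
    refine ⟨hS x hx.1, fun h => hx.2 ?_⟩
    obtain ⟨h1, i, hi⟩ := Finset.mem_filter.1 h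
    exact Finset.mem_filter.2 ⟨hx.1, i + 1, by rw [Function.iterate_succ_apply]; exact hi⟩)
  set H := (⊤ : T.Subgraph).induce (C : Set V) with hHdef
  have hHv : H.verts = (C : Set V) := rfl
  have hdis : ∀ K ∈ P, Disjoint H.verts K.verts := by
    intro K hK
    rw [Set.disjoint_left]
    intro x hx hx'
    have h1 := hP3 K hK hx'
    rw [hHv] at hx
    have h2 := hCD (by simpa using hx)
    simp only [Finset.coe_sdiff, Set.mem_sdiff, Finset.mem_coe] at h1
    exact h1.2 h2
  have hHP : H ∉ P := by
    intro h
    have := Set.disjoint_left.1 (hdis H h) (show v ∈ H.verts by rw [hHv]; simpa using hvC)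
    exact this (by rw [hHv]; simpa using hvC)
  refine ⟨insert H P, ?_, ?_, ?_, ?_⟩
  · intro K hK
    rcases Finset.mem_insert.1 hK with rfl | h
    · exact hH
    · exact hP1 K h
  · rw [Finset.coe_insert]
    refine hP2.insert ?_
    intro K hK _
    exact ⟨hdis K hK, (hdis K hK).symm⟩
  · intro K hK
    rcases Finset.mem_insert.1 hK with rfl | h
    · rw [hHv]; exact_mod_cast hCD.trans hDS
    · exact (hP3 K h).trans (by exact_mod_cast Finset.sdiff_subset)
  · rw [Finset.card_insert_of_notMem hHP, add_mul, one_mul]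
    omega

/-- Let `s ≥ 3` and `k ≥ 1` and let `T` be a finite tree with maximum degree at
most `s` and `v(T) ≥ k + 1`.  Then `τ_k(T) ≥ (v(T) − k)/(sk − k + 1)`. -/
theorem stmt_17 {V : Type} [Fintype V] (s k : ℕ) (hs : 3 ≤ s) (hk : 1 ≤ k)
    (T : SimpleGraph V) [DecidableRel T.Adj] (hT : T.IsTree)
    (hdeg : ∀ v : V, T.degree v ≤ s) (hcard : k + 1 ≤ Fintype.card V) :
    (T.tauK k : ℚ) ≥ ((Fintype.card V : ℚ) - k) / (s * k - k + 1) := by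
  classical
  haveI : Nontrivial V := Fintype.one_lt_card_iff_nontrivial.1 (by omega)
  obtain ⟨r, hr⟩ := hT.exists_vert_degree_one_of_nontrivial
  have hpar : ∀ v, ∃ u, (v = r → u = r) ∧
      (v ≠ r → T.Adj v u ∧ T.dist u r < T.dist v r) := by
    intro v
    by_cases hv : v = r
    · exact ⟨r, fun _ => rfl, fun h => absurd hv h⟩
    · obtain ⟨w, hw⟩ := hT.1.exists_walk_length_eq_dist v r
      cases w with
      | nil => exact absurd rfl hv
      | cons h q =>
        rename_i u
        refine ⟨u, fun h => absurd h hv, fun _ => ⟨h, ?_⟩⟩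
        have := SimpleGraph.dist_le q
        rw [SimpleGraph.Walk.length_cons] at hw
        omega
  choose p hp1 hp2 using hpar
  have hd : ∀ v, v ≠ r → T.dist (p v) r < T.dist v r := fun v hv => (hp2 v hv).2
  obtain ⟨P, hP1, hP2, -, hP4⟩ := aux_main T hT k (s - 1) r p (fun v => T.dist v r)
    (hp1 r rfl) (fun v hv => (hp2 v hv).1) hd (by
      intro v
      by_cases hv : v = r
      · have : (Finset.univ.filter (fun c => p c = v ∧ c ≠ r)) ⊆ T.neighborFinset v := by
          intro c hc
          simp only [Finset.mem_filter, Finset.mem_univ, true_and] at hc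
          rw [SimpleGraph.mem_neighborFinset]
          exact hc.1 ▸ (hp2 c hc.2).1.symm
        have h1 := Finset.card_le_card this
        rw [SimpleGraph.card_neighborFinset_eq_degree, hv, hr] at h1
        rw [hv]
        omega
      · have : (Finset.univ.filter (fun c => p c = v ∧ c ≠ r)) ⊆
            (T.neighborFinset v).erase (p v) := by
          intro c hc
          simp only [Finset.mem_filter, Finset.mem_univ, true_and] at hc
          rw [Finset.mem_erase, SimpleGraph.mem_neighborFinset]
          refine ⟨?_, hc.1 ▸ (hp2 c hc.2).1.symm⟩
          intro h
          have h1 := hd c hc.2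
          have h2 := hd v hv
          rw [hc.1] at h1
          rw [← h] at h2
          omega
        have h1 := Finset.card_le_card this
        rw [Finset.card_erase_of_mem (by
          rw [SimpleGraph.mem_neighborFinset]; exact (hp2 v hv).1),
          SimpleGraph.card_neighborFinset_eq_degree] at h1
        have := hdeg v
        omega) _ Finset.univ rfl (by simp)
  have htau : P.card ≤ T.tauK k := by
    apply le_csSup
    · haveI := Fintype.ofFinite T.Subgraph
      refine ⟨Fintype.card T.Subgraph, ?_⟩
      rintro n ⟨Q, -, -, rfl⟩
      exact Finset.card_le_univ Q
    · exact ⟨P, hP1, hP2, rfl⟩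
  obtain ⟨m, rfl⟩ : ∃ m, s = m + 1 := ⟨s - 1, by omega⟩
  rw [Finset.card_univ, Nat.add_sub_cancel] at hP4
  have hfin : Fintype.card V ≤ T.tauK k * (m * k + 1) + k :=
    hP4.trans (Nat.add_le_add_right (Nat.mul_le_mul_right _ htau) k)
  have hden : (((m + 1 : ℕ) : ℚ) * k - k + 1) = (m : ℚ) * k + 1 := by push_cast; ring
  rw [ge_iff_le, hden, div_le_iff₀ (by positivity), sub_le_iff_le_add]
  exact_mod_cast hfin
end

section
/- Let k ≥ 1 be an integer and let D be a finite simple connected graph whose number of edges equals its number of vertices (equivalently, D is a spanning tree together with one extra edge). Let D_k be the graph obtained from D by subdividing every edge with exactly k new vertices. Then λ_k(D_k) ≥ v(D). -/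
/-- `G'` is obtained from `G` by subdividing each edge `e` of `G` with exactly `f e`
new vertices; `ι` is the embedding of the original (branch) vertices into `G'`.
Each edge `uv` of `G` is replaced by a path `P h` of length `f s(u,v) + 1` from `ι u`
to `ι v`, whose internal vertices are new, these paths are internally disjoint,
they cover all vertices of `G'`, and their edges are exactly the edges of `G'`. -/
def SimpleGraph.IsSubdivision {V V' : Type*} (G : SimpleGraph V) (G' : SimpleGraph V')
    (ι : V → V') (f : Sym2 V → ℕ) : Prop :=
  Function.Injective ι ∧
  ∃ P : ∀ ⦃u v : V⦄, G.Adj u v → G'.Walk (ι u) (ι v),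
    (∀ ⦃u v⦄ (h : G.Adj u v), (P h).IsPath) ∧
    (∀ ⦃u v⦄ (h : G.Adj u v), (P h).length = f s(u, v) + 1) ∧
    (∀ ⦃u v⦄ (h : G.Adj u v), P h.symm = (P h).reverse) ∧
    (∀ ⦃u v⦄ (h : G.Adj u v), ∀ z ∈ (P h).support, z ∈ Set.range ι → z = ι u ∨ z = ι v) ∧
    (∀ x : V', x ∈ Set.range ι ∨ ∃ (u v : V) (h : G.Adj u v), x ∈ (P h).support) ∧
    (∀ ⦃u v u' v' : V⦄ (h : G.Adj u v) (h' : G.Adj u' v'), s(u, v) ≠ s(u', v') →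
      ∀ z : V', z ∈ (P h).support → z ∈ (P h').support → z ∈ Set.range ι) ∧
    (∀ e : Sym2 V', e ∈ G'.edgeSet ↔ ∃ (u v : V) (h : G.Adj u v), e ∈ (P h).edges)

open SimpleGraph in
theorem aux_sdr {V : Type} [Fintype V] (D : SimpleGraph V) (hconn : D.Connected)
    (hedges : D.edgeSet.ncard = Fintype.card V) :
    ∃ g : V → V, (∀ v, D.Adj v (g v)) ∧ Function.Injective (fun v => s(v, g v)) := by
  classical
  have key := (Finset.all_card_le_biUnion_card_iff_exists_injective
    (fun v : V => D.incidenceFinset v)).1 (by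
    intro S
    by_cases hS : S = Finset.univ
    · subst hS
      rw [Finset.card_univ, ← hedges, ← coe_edgeFinset, Set.ncard_coe_finset]
      apply Finset.card_le_card
      intro e he
      induction e with
      | _ a b =>
        rw [mem_edgeFinset, mem_edgeSet] at he
        simp only [Finset.mem_biUnion, Finset.mem_univ, true_and]
        exact ⟨a, by simpa [mem_incidenceFinset, mk'_mem_incidenceSet_left_iff] using he⟩
    · obtain ⟨r, hr⟩ : ∃ r, r ∉ S := by
        by_contra hc
        push Not at hc
        exact hS (Finset.eq_univ_iff_forall.2 hc)
      have hex : ∀ v, ∃ w, v ≠ r → D.Adj v w ∧ D.dist w r < D.dist v r := by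
        intro v
        by_cases hv : v = r
        · exact ⟨v, fun h => (h hv).elim⟩
        · obtain ⟨p, hp⟩ := hconn.exists_walk_length_eq_dist v r
          cases p with
          | nil => exact (hv rfl).elim
          | @cons _ w _ h q =>
            refine ⟨w, fun _ => ⟨h, ?_⟩⟩
            have := dist_le q
            simp only [Walk.length_cons] at hp
            omega
      choose g hg using hex
      have hne : ∀ v ∈ S, v ≠ r := fun v hv h => hr (h ▸ hv)
      apply Finset.card_le_card_of_injOn (fun v => s(v, g v))
      · intro v hv
        simp only [Finset.mem_coe, Finset.mem_biUnion]
        refine ⟨v, hv, ?_⟩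
        simpa [mem_incidenceFinset, mk'_mem_incidenceSet_left_iff] using (hg v (hne v hv)).1
      · intro v hv w hw h
        rcases Sym2.eq_iff.1 h with h | ⟨h1, h2⟩
        · exact h.1
        · have a := (hg v (hne v hv)).2
          have b := (hg w (hne w hw)).2
          rw [h2] at a
          rw [← h1] at b
          omega)
  obtain ⟨f, hf, hf'⟩ := key
  have : ∀ v, ∃ w, D.Adj v w ∧ f v = s(v, w) := by
    intro v
    have := hf' v
    rw [mem_incidenceFinset] at this
    obtain ⟨h1, h2⟩ := this
    obtain ⟨w, hw⟩ := h2
    rw [hw] at h1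
    exact ⟨w, h1, hw⟩
  choose g hg using this
  refine ⟨g, fun v => (hg v).1, ?_⟩
  intro v w h
  apply hf
  rw [(hg v).2, (hg w).2]
  exact h

/-- Let `k ≥ 1` and let `D` be a finite simple connected graph whose number of
edges equals its number of vertices.  Let `D_k` be obtained from `D` by
subdividing every edge with exactly `k` new vertices.  Then `λ_k(D_k) ≥ v(D)`. -/
theorem stmt_19 {V V' : Type} [Fintype V] [Fintype V'] (k : ℕ) (hk : 1 ≤ k)
    (D : SimpleGraph V) (hconn : D.Connected)
    (hedges : D.edgeSet.ncard = Fintype.card V)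
    (Dk : SimpleGraph V') (ι : V → V')
    (hsub : D.IsSubdivision Dk ι (fun _ => k)) :
    Fintype.card V ≤ Dk.lambdaK k := by
  classical
  obtain ⟨g, hadj, hinj⟩ := aux_sdr D hconn hedges
  obtain ⟨hι, P, hpath, hlen, -, hbr, -, hdis, -⟩ := hsub
  let H : V → Dk.Subgraph := fun v => ((P (hadj v)).take k).toSubgraph
  have hsup : ∀ v z, z ∈ (H v).verts → z ∈ (P (hadj v)).support ∧ z ≠ ι (g v) := by
    intro v z hz
    have hz : z ∈ ((P (hadj v)).take k).support := by
      simpa [H] using hz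
    refine ⟨(SimpleGraph.Walk.isSubwalk_take _ _).support_subset hz, ?_⟩
    rintro rfl
    obtain ⟨i, hi, hi'⟩ := SimpleGraph.Walk.mem_support_iff_exists_getVert.1 hz
    have hl : (P (hadj v)).length = k + 1 := hlen (hadj v)
    rw [SimpleGraph.Walk.take_getVert] at hi
    have h2 : (P (hadj v)).getVert (k+1) = ι (g v) := by
      rw [← hl, SimpleGraph.Walk.getVert_length]
    have := (hpath (hadj v)).getVert_injOn (x₁ := min k i) (x₂ := k+1)
      (by simp only [Set.mem_ofPred_eq]; omega) (by simp only [Set.mem_ofPred_eq]; omega) (by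
        first
        | rw [h2, hi]
        | rw [h2, min_comm, hi])
    omega
  have hD : ∀ v w, v ≠ w → Disjoint (H v).verts (H w).verts := by
    intro v w hvw
    rw [Set.disjoint_left]
    intro z hz hz'
    obtain ⟨a, b⟩ := hsup v z hz
    obtain ⟨a', b'⟩ := hsup w z hz'
    have hr := hdis (hadj v) (hadj w) (fun h => hvw (hinj h)) z a a'
    have e1 := (hbr _ z a hr).resolve_right b
    have e2 := (hbr _ z a' hr).resolve_right b'
    exact hvw (hι (e1.symm.trans e2))
  have hH : Function.Injective H := by
    intro v w h
    by_contra hvw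
    have := hD v w hvw
    rw [h, disjoint_self] at this
    have h3 : ι w ∈ (H w).verts := by simp [H]
    rw [this] at h3
    exact h3
  apply le_csSup
  · refine ⟨Nat.card Dk.Subgraph, ?_⟩
    rintro n ⟨Q, -, -, rfl⟩
    haveI := Fintype.ofFinite Dk.Subgraph
    rw [Nat.card_eq_fintype_card]
    exact Finset.card_le_univ Q
  · refine ⟨Finset.univ.image H, ?_, ?_, ?_⟩
    · intro K hK
      obtain ⟨v, -, rfl⟩ := Finset.mem_image.1 hK
      refine ⟨_, _, (P (hadj v)).take k, (hpath _).take k, ?_, rfl⟩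
      have hl : (P (hadj v)).length = k + 1 := hlen (hadj v)
      rw [SimpleGraph.Walk.take_length]
      omega
    · intro A hA B hB hAB
      simp only [Finset.coe_image, Finset.coe_univ, Set.image_univ, Set.mem_range] at hA hB
      obtain ⟨v, rfl⟩ := hA
      obtain ⟨w, rfl⟩ := hB
      exact hD v w (fun h => hAB (h ▸ rfl))
    · rw [Finset.card_image_of_injective _ hH, Finset.card_univ]
end
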